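/- arXiv:2203.10915 — 2 statements merged into one kernel-verified Lean document; each statement's English description precedes it below -/
import Mathlib

section
/- Let u : (0, ∞) → ℝ be a differentiable convex function which is not identically zero, and assume that lim_{x→+∞} u(x) = 0, lim_{x→+∞} u′(x) = 0, and lim_{x→0⁺} x·u(x) = 0. Then for any ξ ∈ ℝ such that the two-sided improper Riemann integral ∫₀^∞ cos(xξ) u(x) dx converges (i.e. the limit of ∫_a^b cos(xξ)u(x)dx as a→0⁺ and b→∞ exists), this integral is strictly positive. -/
open Filter Set MeasureTheory

/-!
Since `cos` is even, `ξ` may be taken nonnegative; for `ξ = 0` the integrand is `u`, which is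
nonnegative because a convex function tending to `0` at infinity with `u' → 0` is nonincreasing.

Let `ξ > 0` and `T = 2π/ξ`. On the period `[nT, (n+1)T]` let `ℓₙ` be the secant line of `u` through
the two zeros `(n + 1/4)T` and `(n + 3/4)T` of `cos (x ξ)`. By convexity `u - ℓₙ` is
nonpositive between these zeros and nonnegative outside them, as is the cosine, so `cos (x ξ) (u x - ℓₙ x) ≥ 0` pointwise (`cos_mul_sub_nonneg`).
The integral of `cos (x ξ) ℓₙ x` over a full period is zero, so the period contributes a
nonnegative amount; in the first period, integrating from `a > 0` produces an error that vanishes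
as `a → 0⁺`.  Hence `L` bounds every partial sum of nonnegative contributions from above.

If `L ≤ 0`, all contributions vanish and `u = ℓₙ` on each period away from the zeros of the cosine.
Differentiability at the points `nT` forces all the slopes to coincide, `u' → 0` makes them zero,
and `u → 0` then gives `u = 0` (`eq_zero_of_agree`), contrary to assumption.
-/

/-! ### Secant lines of a convex function -/

/-- The secant line of `u` through the points over `p` and `q`. -/
noncomputable def secantLine (u : ℝ → ℝ) (p q x : ℝ) : ℝ :=
  u p + (u q - u p) / (q - p) * (x - p)

lemma continuous_secantLine (u : ℝ → ℝ) (p q : ℝ) : Continuous (secantLine u p q) := by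
  unfold secantLine; fun_prop

lemma hasDerivAt_secantLine (u : ℝ → ℝ) (p q x : ℝ) :
    HasDerivAt (secantLine u p q) ((u q - u p) / (q - p)) x := by
  unfold secantLine
  simpa using (((hasDerivAt_id x).sub_const p).const_mul ((u q - u p) / (q - p))).const_add (u p)

lemma le_secantLine {u : ℝ → ℝ} (hconv : ConvexOn ℝ (Ioi (0 : ℝ)) u) {p q x : ℝ}
    (hp : 0 < p) (hpq : p < q) (h1 : p ≤ x) (h2 : x ≤ q) : u x ≤ secantLine u p q x := by
  unfold secantLine
  rcases h1.eq_or_lt with rfl | h1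
  · simp
  have := hconv.secant_mono (mem_Ioi.2 hp) (mem_Ioi.2 (hp.trans h1)) (mem_Ioi.2 (hp.trans hpq))
    h1.ne' hpq.ne' h2
  rw [div_le_iff₀ (by linarith)] at this
  linarith

lemma secantLine_le {u : ℝ → ℝ} (hconv : ConvexOn ℝ (Ioi (0 : ℝ)) u) {p q x : ℝ}
    (hp : 0 < p) (hpq : p < q) (hx : 0 < x) (h : x ≤ p ∨ q ≤ x) : secantLine u p q x ≤ u x := by
  unfold secantLine
  rcases h with h | h
  · rcases h.eq_or_lt with rfl | h
    · simp
    have := hconv.secant_mono (mem_Ioi.2 hp) (mem_Ioi.2 hx) (mem_Ioi.2 (hp.trans hpq))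
      h.ne hpq.ne' (h.le.trans hpq.le)
    rw [div_le_iff_of_neg (by linarith)] at this
    linarith
  · have := hconv.secant_mono (mem_Ioi.2 hp) (mem_Ioi.2 (hp.trans hpq)) (mem_Ioi.2 hx)
      hpq.ne' (by linarith) h
    rw [le_div_iff₀ (by linarith)] at this
    linarith

/-! ### The sign of the integrand on one period -/

/-- The secant line of `u` through the two zeros of `x ↦ cos (x ξ)` in the period
`[n · 2π/ξ, (n+1) · 2π/ξ]`. -/
noncomputable def periodSecant (u : ℝ → ℝ) (ξ : ℝ) (n : ℕ) : ℝ → ℝ :=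
  secantLine u ((n + 1 / 4) * (2 * Real.pi / ξ)) ((n + 3 / 4) * (2 * Real.pi / ξ))

/-- Beyond the zeros of the cosine `u` lies above the secant and `cos` is nonnegative; between
them both signs are reversed. -/
lemma cos_mul_sub_nonneg {u : ℝ → ℝ} (hconv : ConvexOn ℝ (Ioi (0 : ℝ)) u) {ξ : ℝ} (hξ : 0 < ξ)
    (n : ℕ) {x : ℝ} (hx : 0 < x) (h1 : n * (2 * Real.pi / ξ) ≤ x)
    (h2 : x ≤ (n + 1) * (2 * Real.pi / ξ)) :
    0 ≤ Real.cos (x * ξ) * (u x - periodSecant u ξ n x) := by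
  have hpi := Real.pi_pos
  have hT : 0 < 2 * Real.pi / ξ := by positivity
  have hTξ : 2 * Real.pi / ξ * ξ = 2 * Real.pi := by field_simp
  unfold periodSecant
  set T := 2 * Real.pi / ξ
  have hn : (0 : ℝ) ≤ n := n.cast_nonneg
  have hp : 0 < (n + 1 / 4) * T := by positivity
  have hpq : (n + 1 / 4) * T < (n + 3 / 4) * T := by nlinarith
  have key : ∀ c : ℝ, (n + c) * T * ξ = n * (2 * Real.pi) + c * (2 * Real.pi) := by
    intro c; rw [mul_assoc, hTξ]; ring
  have hlow : n * (2 * Real.pi) ≤ x * ξ := by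
    have := mul_le_mul_of_nonneg_right h1 hξ.le
    rwa [mul_assoc, hTξ] at this
  have hhigh := mul_le_mul_of_nonneg_right h2 hξ.le
  rw [key] at hhigh
  rcases le_total x ((n + 1 / 4) * T) with h | h
  · have h' := mul_le_mul_of_nonneg_right h hξ.le
    rw [key] at h'
    refine mul_nonneg ?_ (sub_nonneg.2 (secantLine_le hconv hp hpq hx (Or.inl h)))
    rw [← Real.cos_sub_nat_mul_two_pi _ n]
    exact Real.cos_nonneg_of_mem_Icc ⟨by linarith, by linarith⟩
  rcases le_total x ((n + 3 / 4) * T) with h' | h'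
  · have k1 := mul_le_mul_of_nonneg_right h hξ.le
    have k2 := mul_le_mul_of_nonneg_right h' hξ.le
    rw [key] at k1 k2
    refine mul_nonneg_of_nonpos_of_nonpos ?_ (sub_nonpos.2 (le_secantLine hconv hp hpq h h'))
    rw [← Real.cos_sub_nat_mul_two_pi _ n]
    exact Real.cos_nonpos_of_pi_div_two_le_of_le (by linarith) (by linarith)
  · have k2 := mul_le_mul_of_nonneg_right h' hξ.le
    rw [key] at k2
    refine mul_nonneg ?_ (sub_nonneg.2 (secantLine_le hconv hp hpq hx (Or.inr h')))
    rw [← Real.cos_sub_nat_mul_two_pi _ n, ← Real.cos_sub_two_pi]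
    exact Real.cos_nonneg_of_mem_Icc ⟨by linarith, by linarith⟩

/-! ### Integrals of affine functions against the cosine -/

/-- An antiderivative of `x ↦ cos (x ξ) * secantLine u p q x`. -/
noncomputable def secantPrim (u : ℝ → ℝ) (p q ξ x : ℝ) : ℝ :=
  secantLine u p q x * Real.sin (x * ξ) / ξ + (u q - u p) / (q - p) * Real.cos (x * ξ) / ξ ^ 2

lemma integral_cos_mul_secantLine (u : ℝ → ℝ) (p q : ℝ) {ξ : ℝ} (hξ : 0 < ξ) (a b : ℝ) :
    ∫ x in a..b, Real.cos (x * ξ) * secantLine u p q x =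
      secantPrim u p q ξ b - secantPrim u p q ξ a := by
  apply intervalIntegral.integral_eq_sub_of_hasDerivAt
  · intro x _
    have hm : HasDerivAt (fun x => x * ξ) ξ x := by simpa using (hasDerivAt_id x).mul_const ξ
    have h := (((hasDerivAt_secantLine u p q x).mul hm.sin).div_const ξ).add
      ((hm.cos.const_mul ((u q - u p) / (q - p))).div_const (ξ ^ 2))
    refine h.congr_deriv ?_
    field_simp
    ring
  · have := continuous_secantLine u p q
    exact Continuous.intervalIntegrable (by fun_prop) _ _

lemma secantPrim_period (u : ℝ → ℝ) (p q : ℝ) {ξ : ℝ} (hξ : 0 < ξ) (n : ℕ) :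
    secantPrim u p q ξ (n * (2 * Real.pi / ξ)) = secantPrim u p q ξ 0 := by
  have : n * (2 * Real.pi / ξ) * ξ = n * (2 * Real.pi) := by field_simp
  have h2 : Real.sin (n * (2 * Real.pi)) = 0 := by
    simpa using Real.sin_add_nat_mul_two_pi 0 n
  simp [secantPrim, this, h2]

lemma continuous_secantPrim (u : ℝ → ℝ) (p q ξ : ℝ) : Continuous (secantPrim u p q ξ) := by
  have := continuous_secantLine u p q
  unfold secantPrim
  fun_prop

/-! ### Monotonicity and rigidity -/

lemma eq_zero_of_integral_nonpos {f : ℝ → ℝ} {a b : ℝ} (hab : a < b) (hf : ContinuousOn f (Icc a b))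
    (h0 : ∀ x ∈ Icc a b, 0 ≤ f x) (hi : ∫ x in a..b, f x ≤ 0) : ∀ x ∈ Icc a b, f x = 0 := by
  intro x hx
  by_contra hne
  have hpos : 0 < f x := lt_of_le_of_ne (h0 x hx) (Ne.symm hne)
  have := intervalIntegral.integral_pos hab hf (fun y hy => h0 y ⟨hy.1.le, hy.2⟩) ⟨x, hx, hpos⟩
  linarith

lemma antitoneOn_of_convex {u : ℝ → ℝ}
    (hdiff : ∀ x ∈ Ioi (0 : ℝ), DifferentiableAt ℝ u x)
    (hconv : ConvexOn ℝ (Ioi (0 : ℝ)) u) (hu'_lim : Tendsto (deriv u) atTop (nhds 0)) :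
    AntitoneOn u (Ioi 0) := by
  have hm : MonotoneOn (deriv u) (Ioi 0) := hconv.monotoneOn_deriv hdiff
  apply antitoneOn_of_deriv_nonpos (convex_Ioi 0)
  · exact fun x hx => (hdiff x hx).continuousAt.continuousWithinAt
  · rw [interior_Ioi]; exact fun x hx => (hdiff x hx).differentiableWithinAt
  · rw [interior_Ioi]; intro x hx
    refine ge_of_tendsto hu'_lim ?_
    filter_upwards [eventually_ge_atTop x] with y hy
    exact hm hx (mem_Ioi.2 (lt_of_lt_of_le hx hy)) hy

lemma nonneg_of_antitoneOn {u : ℝ → ℝ} (ha : AntitoneOn u (Ioi 0))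
    (hu_lim : Tendsto u atTop (nhds 0)) {x : ℝ} (hx : 0 < x) : 0 ≤ u x := by
  refine le_of_tendsto hu_lim ?_
  filter_upwards [eventually_ge_atTop x] with y hy
  exact ha hx (mem_Ioi.2 (hx.trans_le hy)) hy

/-- If `u` agrees with its secant in every period (wherever the cosine does not vanish), then
differentiability at the period endpoints makes all the slopes equal, hence zero. -/
lemma eq_zero_of_agree {u : ℝ → ℝ}
    (hdiff : ∀ x ∈ Ioi (0 : ℝ), DifferentiableAt ℝ u x)
    (ha : AntitoneOn u (Ioi 0))
    (hu_lim : Tendsto u atTop (nhds 0)) (hu'_lim : Tendsto (deriv u) atTop (nhds 0))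
    {ξ : ℝ} (hξ : 0 < ξ)
    (h : ∀ n : ℕ, ∀ x, 0 < x → n * (2 * Real.pi / ξ) ≤ x → x ≤ (n + 1) * (2 * Real.pi / ξ) →
      Real.cos (x * ξ) * (u x - periodSecant u ξ n x) = 0) :
    ∀ x, 0 < x → u x = 0 := by
  have hpi := Real.pi_pos
  have hT : 0 < 2 * Real.pi / ξ := by positivity
  have hTξ : 2 * Real.pi / ξ * ξ = 2 * Real.pi := by field_simp
  have hcos1 : ∀ n : ℕ, Real.cos (n * (2 * Real.pi / ξ) * ξ) = 1 := by
    intro n; rw [mul_assoc, hTξ, Real.cos_nat_mul_two_pi]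
  have hcos : ∀ n : ℕ, ∀ᶠ x in nhds (n * (2 * Real.pi / ξ)), Real.cos (x * ξ) ≠ 0 := by
    intro n
    have : ContinuousAt (fun x => Real.cos (x * ξ)) (n * (2 * Real.pi / ξ)) := by fun_prop
    exact this.eventually_ne (by simp [hcos1])
  set T := 2 * Real.pi / ξ with hTdef
  let s : ℕ → ℝ := fun n =>
    (u ((n + 3 / 4) * T) - u ((n + 1 / 4) * T)) / ((n + 3 / 4) * T - (n + 1 / 4) * T)
  have hs : ∀ n x, HasDerivAt (periodSecant u ξ n) (s n) x := fun n x =>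
    hasDerivAt_secantLine u _ _ x
  have hend : ∀ n : ℕ, u ((n + 1) * T) = periodSecant u ξ n ((n + 1) * T) := by
    intro n
    have h1 := h n ((n + 1) * T) (by positivity) (by nlinarith) le_rfl
    have h2 := hcos1 (n + 1)
    push_cast at h2
    rw [h2] at h1
    linarith
  have hstart : ∀ n : ℕ, u ((n + 1) * T) = periodSecant u ξ (n + 1) ((n + 1) * T) := by
    intro n
    have h1 := h (n + 1) ((n + 1) * T) (by positivity) (by push_cast; rfl)
      (by push_cast; nlinarith)
    have h2 := hcos1 (n + 1)
    push_cast at h2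
    rw [h2] at h1
    linarith
  have hleft : ∀ n : ℕ, deriv u ((n + 1) * T) = s n := by
    intro n
    have hpos : 0 < ((n : ℝ) + 1) * T := by positivity
    have h1 : HasDerivWithinAt u (s n) (Iic ((n + 1) * T)) ((n + 1) * T) := by
      refine (hs n _).hasDerivWithinAt.congr_of_eventuallyEq ?_ (hend n)
      have h2 := hcos (n + 1)
      push_cast at h2
      have hlt : n * T < (n + 1) * T := by nlinarith
      filter_upwards [self_mem_nhdsWithin, nhdsWithin_le_nhds h2,
        nhdsWithin_le_nhds (lt_mem_nhds hlt)] with x hx hc hl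
      have hn0 : 0 ≤ (n : ℝ) * T := by positivity
      have := h n x (by linarith) hl.le hx
      rcases mul_eq_zero.1 this with h | h
      · exact absurd h hc
      · linarith
    exact (uniqueDiffWithinAt_Iic _).eq_deriv _
      (hdiff _ hpos).hasDerivAt.hasDerivWithinAt h1
  have hright : ∀ n : ℕ, deriv u ((n + 1) * T) = s (n + 1) := by
    intro n
    have hpos : 0 < ((n : ℝ) + 1) * T := by positivity
    have h1 : HasDerivWithinAt u (s (n + 1)) (Ici ((n + 1) * T)) ((n + 1) * T) := by
      refine (hs (n + 1) _).hasDerivWithinAt.congr_of_eventuallyEq ?_ (hstart n)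
      have h2 := hcos (n + 1)
      push_cast at h2
      have hlt : (n + 1) * T < (n + 1 + 1) * T := by nlinarith
      filter_upwards [self_mem_nhdsWithin, nhdsWithin_le_nhds h2,
        nhdsWithin_le_nhds (gt_mem_nhds hlt)] with x hx hc hl
      have hx' : ((n : ℝ) + 1) * T ≤ x := hx
      have := h (n + 1) x (by linarith) (by push_cast; exact hx) (by push_cast; exact hl.le)
      rcases mul_eq_zero.1 this with h | h
      · exact absurd h hc
      · linarith
    exact (uniqueDiffWithinAt_Ici _).eq_deriv _
      (hdiff _ hpos).hasDerivAt.hasDerivWithinAt h1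
  have hsc : ∀ n, s n = s 0 := by
    intro n
    induction n with
    | zero => rfl
    | succ k ih => rw [← hright, hleft, ih]
  have hlim : Tendsto (fun n : ℕ => ((n : ℝ) + 1) * T) atTop atTop :=
    (tendsto_atTop_add_const_right _ _ tendsto_natCast_atTop_atTop).atTop_mul_const hT
  have hs0 : s 0 = 0 := by
    have h1 := hu'_lim.comp hlim
    have h2 : (deriv u ∘ fun n : ℕ => ((n : ℝ) + 1) * T) = fun _ => s 0 := by
      ext n; simp only [Function.comp]; rw [hleft, hsc]
    rw [h2] at h1
    exact tendsto_nhds_unique tendsto_const_nhds h1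
  have hflat : ∀ n x, periodSecant u ξ n x = u ((n + 1 / 4) * T) := by
    intro n x
    have h1 : s n = 0 := by rw [hsc, hs0]
    change u ((n + 1 / 4) * T) + s n * _ = _
    rw [h1]; ring
  have hval : ∀ n : ℕ, u ((n + 1) * T) = u ((0 + 1) * T) := by
    intro n
    induction n with
    | zero => simp
    | succ k ih => rw [hend, hflat, ← ih, hstart k, hflat]
  have hT0 : u ((0 + 1) * T) = 0 := by
    have h1 := hu_lim.comp hlim
    have h2 : (u ∘ fun n : ℕ => ((n : ℝ) + 1) * T) = fun _ => u ((0 + 1) * T) := by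
      ext n; simp only [Function.comp]; rw [hval]
    rw [h2] at h1
    exact tendsto_nhds_unique tendsto_const_nhds h1
  -- `u` vanishes at points arbitrarily close to `0`; monotonicity does the rest
  intro x hx
  have h2 := hcos 0
  simp only [Nat.cast_zero, zero_mul] at h2
  obtain ⟨y, hy0, hyc, hyx, hyT⟩ := ((eventually_mem_nhdsWithin (a := (0:ℝ)) (s := Ioi 0)).and
    (nhdsWithin_le_nhds (h2.and ((gt_mem_nhds hx).and (gt_mem_nhds hT))))).exists
  have hy0' : 0 < y := hy0
  have h3 := h 0 y hy0' (by simpa using hy0'.le) (by simpa using hyT.le)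
  have h4 : u y = 0 := by
    have h5 := hend 0
    rw [hflat] at h5
    rcases mul_eq_zero.1 h3 with h | h
    · exact absurd h hyc
    · rw [hflat, ← h5] at h
      push_cast at h
      linarith
  have h6 := nonneg_of_antitoneOn ha hu_lim hx
  have h7 := ha hy0 (mem_Ioi.2 hx) hyx.le
  linarith

/-! ### Positivity of the integral -/

/-- On a subinterval of the positive axis, `∫ cos (x ξ) u` splits into the integral of the
nonnegative function `cos (x ξ) (u - ℓ)` and an explicit boundary term. -/
lemma integral_split {u : ℝ → ℝ} (hcont : ContinuousOn u (Ioi 0)) (p q : ℝ) {ξ : ℝ} (hξ : 0 < ξ)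
    {a b : ℝ} (ha : 0 < a) (hab : a ≤ b) :
    ∫ x in a..b, Real.cos (x * ξ) * u x =
      (∫ x in a..b, Real.cos (x * ξ) * (u x - secantLine u p q x)) +
        (secantPrim u p q ξ b - secantPrim u p q ξ a) := by
  have hsub : uIcc a b ⊆ Ioi 0 := by
    rw [uIcc_of_le hab]; exact fun x hx => mem_Ioi.2 (ha.trans_le hx.1)
  have hu := hcont.mono hsub
  have hl := (continuous_secantLine u p q).continuousOn (s := uIcc a b)
  rw [← integral_cos_mul_secantLine u p q hξ, ← intervalIntegral.integral_add]
  · congr 1; ext x; ring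
  · exact ContinuousOn.intervalIntegrable (by fun_prop)
  · exact ContinuousOn.intervalIntegrable (by fun_prop)

/-- The case of positive frequency. -/
lemma tuck_pos_freq {u : ℝ → ℝ}
    (hdiff : ∀ x ∈ Ioi (0 : ℝ), DifferentiableAt ℝ u x)
    (hconv : ConvexOn ℝ (Ioi (0 : ℝ)) u)
    (hne : ∃ x ∈ Ioi (0 : ℝ), u x ≠ 0)
    (hu_lim : Tendsto u atTop (nhds 0))
    (hu'_lim : Tendsto (deriv u) atTop (nhds 0))
    {ξ : ℝ} (hξ : 0 < ξ) {L : ℝ}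
    (hL : Tendsto (fun p : ℝ × ℝ => ∫ x in p.1..p.2, Real.cos (x * ξ) * u x)
      ((nhdsWithin 0 (Ioi 0)) ×ˢ atTop) (nhds L)) :
    0 < L := by
  have hpi := Real.pi_pos
  have hT : 0 < 2 * Real.pi / ξ := by positivity
  have hanti := antitoneOn_of_convex hdiff hconv hu'_lim
  have hcont : ContinuousOn u (Ioi 0) := fun x hx => (hdiff x hx).continuousAt.continuousWithinAt
  have hprim : ∀ p q : ℝ, ∀ n : ℕ, secantPrim u p q ξ (n * (2 * Real.pi / ξ)) =
    secantPrim u p q ξ 0 := fun p q n => secantPrim_period u p q hξ n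
  have hnonneg := fun n : ℕ => fun x : ℝ => cos_mul_sub_nonneg hconv hξ n (x := x)
  have hzero := eq_zero_of_agree hdiff hanti hu_lim hu'_lim hξ
  set T := 2 * Real.pi / ξ with hTdef
  let g : ℕ → ℝ → ℝ := fun n x => Real.cos (x * ξ) * (u x - periodSecant u ξ n x)
  have hgc : ∀ n, ContinuousOn (g n) (Ioi 0) := by
    intro n
    have : Continuous (periodSecant u ξ n) := continuous_secantLine u _ _
    fun_prop
  have hgi : ∀ n a b, 0 < a → a ≤ b → IntervalIntegrable (g n) volume a b := by
    intro n a b ha hab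
    refine ((hgc n).mono ?_).intervalIntegrable
    rw [uIcc_of_le hab]; exact fun x hx => mem_Ioi.2 (ha.trans_le hx.1)
  let e : ℝ → ℝ := secantPrim u ((((0 : ℕ) : ℝ) + 1 / 4) * T) ((((0 : ℕ) : ℝ) + 3 / 4) * T) ξ
  let P : ℝ → ℝ := fun a => ∫ x in a..T, g 0 x
  let I : ℕ → ℝ := fun n => ∫ x in ((n : ℝ) + 1) * T..((n : ℝ) + 2) * T, g (n + 1) x
  have hI : ∀ n, 0 ≤ I n := by
    intro n
    refine intervalIntegral.integral_nonneg (by nlinarith) fun x hx => ?_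
    have h0 : 0 < ((n : ℝ) + 1) * T := by positivity
    exact hnonneg (n + 1) x (h0.trans_le hx.1) (by push_cast; exact hx.1)
      (by push_cast; linarith [hx.2])
  have hg0 : ∀ x, 0 < x → x ≤ T → 0 ≤ g 0 x := fun x hx hxT =>
    hnonneg 0 x hx (by simpa using hx.le) (by simpa using hxT)
  have hP : ∀ a, 0 < a → a ≤ T → 0 ≤ P a := fun a ha haT =>
    intervalIntegral.integral_nonneg haT fun x hx => hg0 x (ha.trans_le hx.1) hx.2
  have hPmono : ∀ a b, 0 < a → a ≤ b → b ≤ T → P b ≤ P a := by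
    intro a b ha hab hbT
    have h1 : (∫ x in a..b, g 0 x) + P b = P a :=
      intervalIntegral.integral_add_adjacent_intervals (hgi 0 a b ha hab)
        (hgi 0 b T (ha.trans_le hab) hbT)
    have h2 : 0 ≤ ∫ x in a..b, g 0 x := intervalIntegral.integral_nonneg hab fun x hx =>
      hg0 x (ha.trans_le hx.1) (hx.2.trans hbT)
    linarith
  have hsum : ∀ N : ℕ, ∀ a, 0 < a → a ≤ T →
      ∫ x in a..((N : ℝ) + 1) * T, Real.cos (x * ξ) * u x =
        P a + (e 0 - e a) + ∑ n ∈ Finset.range N, I n := by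
    intro N a ha haT
    induction N with
    | zero =>
      have h1 := integral_split hcont ((((0 : ℕ) : ℝ) + 1 / 4) * T)
        ((((0 : ℕ) : ℝ) + 3 / 4) * T) hξ ha haT
      have h2 := hprim ((((0 : ℕ) : ℝ) + 1 / 4) * T) ((((0 : ℕ) : ℝ) + 3 / 4) * T) 1
      rw [Nat.cast_one, one_mul] at h2
      rw [h2] at h1
      rw [Finset.sum_range_zero, add_zero, Nat.cast_zero, zero_add, one_mul]
      exact h1
    | succ k ih =>
      have hk : 0 < ((k : ℝ) + 1) * T := by positivity
      have hle : ((k : ℝ) + 1) * T ≤ ((k : ℝ) + 2) * T := by nlinarith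
      have hak : a ≤ ((k : ℝ) + 1) * T := by
        have : (0 : ℝ) ≤ k * T := by positivity
        linarith
      have hii : ∀ a b, 0 < a → a ≤ b →
          IntervalIntegrable (fun x => Real.cos (x * ξ) * u x) volume a b := by
        intro a b ha hab
        refine ContinuousOn.intervalIntegrable (ContinuousOn.mono (s := Ioi 0) (by fun_prop) ?_)
        rw [uIcc_of_le hab]; exact fun x hx => mem_Ioi.2 (ha.trans_le hx.1)
      have h1 := integral_split hcont ((((k + 1 : ℕ) : ℝ) + 1 / 4) * T)
        ((((k + 1 : ℕ) : ℝ) + 3 / 4) * T) hξ hk hle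
      have h2 := hprim ((((k + 1 : ℕ) : ℝ) + 1 / 4) * T) ((((k + 1 : ℕ) : ℝ) + 3 / 4) * T)
      have h3 := h2 (k + 1)
      have h4 := h2 (k + 2)
      have e3 : ((k + 1 : ℕ) : ℝ) * T = ((k : ℝ) + 1) * T := by push_cast; rfl
      have e4 : ((k + 2 : ℕ) : ℝ) * T = ((k : ℝ) + 2) * T := by push_cast; rfl
      rw [e3] at h3
      rw [e4] at h4
      rw [h3, h4, sub_self, add_zero] at h1
      have h5 := intervalIntegral.integral_add_adjacent_intervals (hii a _ ha hak) (hii _ _ hk hle)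
      have h6 : ∫ x in ((k : ℝ) + 1) * T..((k : ℝ) + 2) * T, Real.cos (x * ξ) * u x = I k := h1
      have e6 : (((k + 1 : ℕ) : ℝ) + 1) * T = ((k : ℝ) + 2) * T := by push_cast; ring
      rw [e6, ← h5, ih, h6, Finset.sum_range_succ]
      ring
  have hlimN : Tendsto (fun n : ℕ => ((n : ℝ) + 1) * T) atTop atTop :=
    (tendsto_atTop_add_const_right _ _ tendsto_natCast_atTop_atTop).atTop_mul_const hT
  have he : Tendsto e (nhdsWithin 0 (Ioi 0)) (nhds (e 0)) :=
    ((continuous_secantPrim u _ _ ξ).tendsto 0).mono_left nhdsWithin_le_nhds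
  -- every partial sum of the nonnegative contributions is a lower bound for the integral
  have hlow : ∀ a0, 0 < a0 → a0 ≤ T → ∀ N0 : ℕ, P a0 + ∑ n ∈ Finset.range N0, I n ≤ L := by
    intro a0 ha0 ha0T N0
    have h1 : Tendsto (fun p : ℝ × ℕ => (∫ x in p.1..((p.2 : ℝ) + 1) * T, Real.cos (x * ξ) * u x)
        - (e 0 - e p.1)) ((nhdsWithin 0 (Ioi 0)) ×ˢ atTop) (nhds (L - (e 0 - e 0))) :=
      (hL.comp (tendsto_id.prodMap hlimN)).sub ((he.comp tendsto_fst).const_sub (e 0))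
    rw [sub_self, sub_zero] at h1
    refine ge_of_tendsto h1 ?_
    have hev : ∀ᶠ a in nhdsWithin (0 : ℝ) (Ioi 0), 0 < a ∧ a ≤ a0 :=
      eventually_mem_nhdsWithin.and
        (nhdsWithin_le_nhds ((gt_mem_nhds ha0).mono fun _ h => le_of_lt h))
    filter_upwards [hev.prod_mk (eventually_ge_atTop N0)] with p hp
    obtain ⟨⟨hp0, hpa⟩, hpN⟩ := hp
    rw [hsum p.2 p.1 hp0 (hpa.trans ha0T)]
    have h2 := hPmono p.1 a0 hp0 hpa ha0T
    have h3 : ∑ n ∈ Finset.range N0, I n ≤ ∑ n ∈ Finset.range p.2, I n :=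
      Finset.sum_le_sum_of_subset_of_nonneg (Finset.range_mono hpN) fun n _ _ => hI n
    linarith
  by_contra hLneg
  obtain ⟨x0, hx0, hx0ne⟩ := hne
  refine hx0ne (hzero ?_ x0 hx0)
  intro n x hx h1 h2
  cases n with
  | zero =>
    have hxT : x ≤ T := by simpa using h2
    -- integrate from `x / 2` so that `x = T` is covered too
    have hlt : x / 2 < T := by linarith
    have h3 := hlow (x / 2) (by positivity) hlt.le 0
    rw [Finset.sum_range_zero, add_zero] at h3
    refine eq_zero_of_integral_nonpos (f := g 0) hlt ((hgc 0).mono fun y hy => ?_)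
      (fun y hy => ?_) (by change P (x / 2) ≤ 0; linarith) x ⟨by linarith, hxT⟩
    · exact mem_Ioi.2 (by linarith [hy.1])
    · exact hg0 y (by linarith [hy.1]) hy.2
  | succ k =>
    have h3 := hlow T hT le_rfl (k + 1)
    have h4 := hP T hT le_rfl
    have h5 : I k ≤ ∑ n ∈ Finset.range (k + 1), I n :=
      Finset.single_le_sum (fun n _ => hI n) (Finset.self_mem_range_succ k)
    have hk : 0 < ((k : ℝ) + 1) * T := by positivity
    push_cast at h1 h2
    refine eq_zero_of_integral_nonpos (f := g (k + 1)) (a := ((k : ℝ) + 1) * T)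
      (b := ((k : ℝ) + 2) * T) (by nlinarith) ((hgc (k + 1)).mono fun y hy => ?_)
      (fun y hy => ?_) (by change I k ≤ 0; linarith) x ⟨h1, by linarith⟩
    · exact mem_Ioi.2 (hk.trans_le hy.1)
    · exact hnonneg (k + 1) y (hk.trans_le hy.1) (by push_cast; exact hy.1)
        (by push_cast; linarith [hy.2])

/-- The case of zero frequency, where the integrand is `u ≥ 0` itself. -/
lemma tuck_zero_freq {u : ℝ → ℝ}
    (hdiff : ∀ x ∈ Ioi (0 : ℝ), DifferentiableAt ℝ u x)
    (hconv : ConvexOn ℝ (Ioi (0 : ℝ)) u)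
    (hne : ∃ x ∈ Ioi (0 : ℝ), u x ≠ 0)
    (hu_lim : Tendsto u atTop (nhds 0))
    (hu'_lim : Tendsto (deriv u) atTop (nhds 0)) {L : ℝ}
    (hL : Tendsto (fun p : ℝ × ℝ => ∫ x in p.1..p.2, u x)
      ((nhdsWithin 0 (Ioi 0)) ×ˢ atTop) (nhds L)) :
    0 < L := by
  have hanti := antitoneOn_of_convex hdiff hconv hu'_lim
  have hcont : ContinuousOn u (Ioi 0) := fun x hx => (hdiff x hx).continuousAt.continuousWithinAt
  have hnn : ∀ x, 0 < x → 0 ≤ u x := fun x hx => nonneg_of_antitoneOn hanti hu_lim hx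
  obtain ⟨x0, hx0, hne⟩ := hne
  have hx0' : 0 < x0 := hx0
  have hii : ∀ a b, 0 < a → a ≤ b → IntervalIntegrable u volume a b := by
    intro a b ha hab
    refine (hcont.mono ?_).intervalIntegrable
    rw [uIcc_of_le hab]; exact fun x hx => mem_Ioi.2 (ha.trans_le hx.1)
  have hpos : 0 < ∫ x in x0 / 2..x0, u x := by
    refine intervalIntegral.integral_pos (by linarith) (hcont.mono fun y hy => ?_)
      (fun y hy => hnn y (by linarith [hy.1])) ⟨x0, ⟨by linarith, le_rfl⟩,
        lt_of_le_of_ne (hnn x0 hx0) hne.symm⟩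
    exact mem_Ioi.2 (by linarith [hy.1])
  refine hpos.trans_le (ge_of_tendsto hL ?_)
  have hev : ∀ᶠ a in nhdsWithin (0 : ℝ) (Ioi 0), 0 < a ∧ a < x0 / 2 :=
    eventually_mem_nhdsWithin.and (nhdsWithin_le_nhds (gt_mem_nhds (half_pos hx0')))
  filter_upwards [hev.prod_mk (eventually_ge_atTop x0)] with p hp
  obtain ⟨⟨hp0, hpa⟩, hpb⟩ := hp
  refine intervalIntegral.integral_mono_interval hpa.le (by linarith) hpb ?_
    (hii _ _ hp0 (by linarith))
  filter_upwards [ae_restrict_mem measurableSet_Ioc] with y hy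
  exact hnn y (hp0.trans hy.1)

/-- **Tuck's lemma.** Let `u : (0,∞) → ℝ` be a differentiable convex function, not identically
zero, with `u(x) → 0` and `u'(x) → 0` as `x → +∞`, and `x·u(x) → 0` as `x → 0⁺`. Then for any
`ξ ∈ ℝ` for which the two-sided improper Riemann integral `∫₀^∞ cos(xξ) u(x) dx` converges
(i.e. `∫_a^b cos(xξ) u(x) dx` has a limit `L` as `a → 0⁺` and `b → ∞`), the integral is
strictly positive. -/
theorem tuck_positivity (u : ℝ → ℝ)
    (hdiff : ∀ x ∈ Set.Ioi (0 : ℝ), DifferentiableAt ℝ u x)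
    (hconv : ConvexOn ℝ (Set.Ioi (0 : ℝ)) u)
    (hne : ∃ x ∈ Set.Ioi (0 : ℝ), u x ≠ 0)
    (hu_lim : Tendsto u atTop (nhds 0))
    (hu'_lim : Tendsto (deriv u) atTop (nhds 0))
    (hxu_lim : Tendsto (fun x => x * u x) (nhdsWithin 0 (Set.Ioi 0)) (nhds 0))
    (ξ : ℝ) (L : ℝ)
    (hL : Tendsto (fun p : ℝ × ℝ => ∫ x in p.1..p.2, Real.cos (x * ξ) * u x)
      ((nhdsWithin 0 (Set.Ioi 0)) ×ˢ atTop) (nhds L)) :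
    0 < L := by
  rcases eq_or_ne ξ 0 with rfl | hξ
  · exact tuck_zero_freq hdiff hconv hne hu_lim hu'_lim (by simpa using hL)
  · refine tuck_pos_freq hdiff hconv hne hu_lim hu'_lim (abs_pos.2 hξ) (hL.congr fun p => ?_)
    refine intervalIntegral.integral_congr fun x _ => ?_
    rcases abs_cases ξ with ⟨h, _⟩ | ⟨h, _⟩ <;> simp [h]
end

section
/- Let v be a weakly decreasing (monotone nonincreasing) continuous function on (0, ∞) with lim_{x→+∞} v(x) = 0, such that v is not identically zero and such that the two-sided improper Riemann integral ∫₀^∞ sin(x) v(x) dx converges. Then ∫₀^∞ sin(x) v(x) dx > 0. -/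
/-!
On the period `[2πk, 2π(k+1)]` let `c = v(2πk + π)` be the value of `v` at the centre. Since `v` is
nonincreasing and `sin` is nonnegative on the first half and nonpositive on the second, the product
`sin x * (v x - c)` is nonnegative there (`sine_gap_nonneg`). As `∫ sin` over a full period
vanishes, every period with `k ≥ 1` contributes a nonnegative amount. Since `v` may be unbounded
near `0`, the first period is cut off at `a > 0`, and it contributes at least `v(π) (cos a - 1)`,
which tends to `0` as `a → 0⁺`.

For strictness, `v` is nonconstant on the interior of some period
(`exists_nonconstant_period`): otherwise continuity would make `v` constant on `(0, ∞)`, hence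
zero because of its limit at infinity. That period contributes a fixed `δ > 0`, and so `L ≥ δ`.
-/

open Filter Set MeasureTheory

lemma sine_gap_nonneg {v : ℝ → ℝ} (hmono : AntitoneOn v (Ioi (0 : ℝ))) (k : ℕ) {x : ℝ}
    (hx0 : 0 < x) (hx1 : k * (2 * Real.pi) ≤ x) (hx2 : x ≤ (k + 1) * (2 * Real.pi)) :
    0 ≤ Real.sin x * (v x - v (k * (2 * Real.pi) + Real.pi)) := by
  have hpi := Real.pi_pos
  have hc : (0 : ℝ) < k * (2 * Real.pi) + Real.pi := by positivity
  have hs : Real.sin x = Real.sin (x - k * (2 * Real.pi)) :=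
    (Real.sin_sub_nat_mul_two_pi x k).symm
  rcases le_total x (k * (2 * Real.pi) + Real.pi) with h | h
  · apply mul_nonneg
    · rw [hs]
      exact Real.sin_nonneg_of_nonneg_of_le_pi (by linarith) (by linarith)
    · linarith [hmono hx0 hc h]
  · apply mul_nonneg_of_nonpos_of_nonpos
    · rw [hs, ← Real.sin_sub_two_pi]
      exact Real.sin_nonpos_of_nonpos_of_neg_pi_le (by linarith) (by linarith)
    · linarith [hmono hc hx0 h]

lemma sine_ne_zero_of_mem_period (k : ℕ) {x : ℝ} (hx1 : k * (2 * Real.pi) < x)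
    (hx2 : x < (k + 1) * (2 * Real.pi)) (hx : x ≠ k * (2 * Real.pi) + Real.pi) :
    Real.sin x ≠ 0 := by
  rw [← Real.sin_sub_nat_mul_two_pi x k]
  rcases lt_or_gt_of_ne hx with h | h
  · exact (Real.sin_pos_of_pos_of_lt_pi (by linarith) (by linarith)).ne'
  · rw [← Real.sin_sub_two_pi]
    exact (Real.sin_neg_of_neg_of_neg_pi_lt (by linarith) (by linarith)).ne

lemma sine_mul_intervalIntegrable {v : ℝ → ℝ} (hcont : ContinuousOn v (Ioi (0 : ℝ))) {a b : ℝ}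
    (ha : 0 < a) (hb : 0 < b) :
    IntervalIntegrable (fun x => Real.sin x * v x) volume a b := by
  apply ContinuousOn.intervalIntegrable
  refine Real.continuous_sin.continuousOn.mul (hcont.mono fun x hx => ?_)
  exact lt_of_lt_of_le (lt_min ha hb) hx.1

lemma sine_gap_continuousOn {v : ℝ → ℝ} (hcont : ContinuousOn v (Ioi (0 : ℝ))) (c : ℝ) {a b : ℝ}
    (ha : 0 < a) : ContinuousOn (fun x => Real.sin x * (v x - c)) (Icc a b) :=
  Real.continuous_sin.continuousOn.mul
    ((hcont.mono fun _ hx => lt_of_lt_of_le ha hx.1).sub continuousOn_const)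

lemma integral_sine_mul_eq {v : ℝ → ℝ} (hcont : ContinuousOn v (Ioi (0 : ℝ))) (c : ℝ) (k : ℕ)
    {a : ℝ} (ha : 0 < a) :
    ∫ x in a..((k + 1 : ℝ) * (2 * Real.pi)), Real.sin x * v x =
      (∫ x in a..((k + 1 : ℝ) * (2 * Real.pi)), Real.sin x * (v x - c))
        + c * (Real.cos a - 1) := by
  have hpi := Real.pi_pos
  have hcos : Real.cos ((k + 1 : ℝ) * (2 * Real.pi)) = 1 := by
    exact_mod_cast Real.cos_nat_mul_two_pi (k + 1)
  have h1 : ∫ x in a..((k + 1 : ℝ) * (2 * Real.pi)), Real.sin x * (v x - c) =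
      ∫ x in a..((k + 1 : ℝ) * (2 * Real.pi)), (Real.sin x * v x - c * Real.sin x) :=
    intervalIntegral.integral_congr fun x _ => by ring
  rw [h1, intervalIntegral.integral_sub (sine_mul_intervalIntegrable hcont ha (by positivity))
      ((Real.continuous_sin.const_mul c).intervalIntegrable _ _),
    intervalIntegral.integral_const_mul, integral_sin, hcos]
  ring

/-- The contribution of a period, possibly cut off on the left. -/
lemma integral_period_ge {v : ℝ → ℝ} (hmono : AntitoneOn v (Ioi (0 : ℝ)))
    (hcont : ContinuousOn v (Ioi (0 : ℝ))) (k : ℕ) {a : ℝ} (ha : 0 < a)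
    (ha1 : k * (2 * Real.pi) ≤ a) (ha2 : a ≤ (k + 1) * (2 * Real.pi)) :
    v (k * (2 * Real.pi) + Real.pi) * (Real.cos a - 1) ≤
      ∫ x in a..((k + 1 : ℝ) * (2 * Real.pi)), Real.sin x * v x := by
  rw [integral_sine_mul_eq hcont (v (k * (2 * Real.pi) + Real.pi)) k ha]
  have : 0 ≤ ∫ x in a..((k + 1 : ℝ) * (2 * Real.pi)),
      Real.sin x * (v x - v (k * (2 * Real.pi) + Real.pi)) :=
    intervalIntegral.integral_nonneg ha2 fun x hx =>
      sine_gap_nonneg hmono k (ha.trans_le hx.1) (ha1.trans hx.1) hx.2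
  linarith

lemma integral_monotone {v : ℝ → ℝ} (hmono : AntitoneOn v (Ioi (0 : ℝ)))
    (hcont : ContinuousOn v (Ioi (0 : ℝ))) {a : ℝ} (ha : 0 < a) {m n : ℕ} (hm : 1 ≤ m)
    (hmn : m ≤ n) :
    ∫ x in a..((m : ℝ) * (2 * Real.pi)), Real.sin x * v x ≤
      ∫ x in a..((n : ℝ) * (2 * Real.pi)), Real.sin x * v x := by
  have hpi := Real.pi_pos
  induction n, hmn using Nat.le_induction with
  | base => exact le_rfl
  | succ n hn ih =>
    have hn0 : (0 : ℝ) < n := by exact_mod_cast hm.trans hn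
    have h := integral_period_ge hmono hcont n (a := n * (2 * Real.pi)) (by positivity) le_rfl
      (by nlinarith)
    rw [Real.cos_nat_mul_two_pi, sub_self, mul_zero] at h
    have h2 := intervalIntegral.integral_add_adjacent_intervals
      (sine_mul_intervalIntegrable hcont ha (b := n * (2 * Real.pi)) (by positivity))
      (sine_mul_intervalIntegrable hcont (a := n * (2 * Real.pi)) (b := (n + 1) * (2 * Real.pi))
        (by positivity) (by positivity))
    push_cast
    linarith

lemma exists_nonconstant_period {v : ℝ → ℝ} (hcont : ContinuousOn v (Ioi (0 : ℝ)))
    (hlim : Tendsto v atTop (nhds 0)) (hne : ∃ x ∈ Ioi (0 : ℝ), v x ≠ 0) :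
    ∃ k : ℕ, ∃ x : ℝ, k * (2 * Real.pi) < x ∧ x < (k + 1) * (2 * Real.pi) ∧
      v x ≠ v (k * (2 * Real.pi) + Real.pi) := by
  have hpi := Real.pi_pos
  by_contra! hcon
  have hclosed : ∀ k : ℕ, ∀ x : ℝ, 0 < x → k * (2 * Real.pi) ≤ x → x ≤ (k + 1) * (2 * Real.pi) →
      v x = v (k * (2 * Real.pi) + Real.pi) := by
    intro k x hx0 hx1 hx2
    have hk : (0 : ℝ) ≤ k * (2 * Real.pi) := by positivity
    have hE : EqOn v (fun _ => v (k * (2 * Real.pi) + Real.pi))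
        (Ioo (k * (2 * Real.pi)) ((k + 1) * (2 * Real.pi))) := fun y hy => hcon k y hy.1 hy.2
    refine hE.of_subset_closure
      (t := Icc (k * (2 * Real.pi)) ((k + 1) * (2 * Real.pi)) ∩ Ioi 0)
      (hcont.mono inter_subset_right) continuousOn_const
      (fun y hy => ⟨Ioo_subset_Icc_self hy, hk.trans_lt hy.1⟩) ?_ ⟨⟨hx1, hx2⟩, hx0⟩
    rw [closure_Ioo (by nlinarith)]
    exact inter_subset_left
  have hcentre : ∀ k : ℕ, v (k * (2 * Real.pi) + Real.pi) = v Real.pi := by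
    intro k
    induction k with
    | zero => simp
    | succ k ih =>
      have hpos : (0 : ℝ) < (k + 1) * (2 * Real.pi) := by positivity
      have h1 := hclosed k _ hpos (by nlinarith) le_rfl
      have h2 := hclosed (k + 1) ((k + 1) * (2 * Real.pi)) hpos (by push_cast; exact le_rfl)
        (by push_cast; nlinarith)
      rw [← h2, h1, ih]
  have hseq : Tendsto (fun k : ℕ => (k : ℝ) * (2 * Real.pi) + Real.pi) atTop atTop :=
    tendsto_atTop_add_const_right _ _
      (tendsto_natCast_atTop_atTop.atTop_mul_const (by positivity))
  have hzero : v Real.pi = 0 := by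
    have h := hlim.comp hseq
    have h' : v ∘ (fun k : ℕ => (k : ℝ) * (2 * Real.pi) + Real.pi) = fun _ => v Real.pi :=
      funext hcentre
    rw [h'] at h
    exact tendsto_nhds_unique tendsto_const_nhds h
  obtain ⟨x, hx, hvx⟩ := hne
  have hx' : 0 < x := hx
  have hfl : (⌊x / (2 * Real.pi)⌋₊ : ℝ) ≤ x / (2 * Real.pi) := Nat.floor_le (by positivity)
  have hfu := (Nat.lt_floor_add_one (x / (2 * Real.pi))).le
  rw [le_div_iff₀ (by positivity)] at hfl
  rw [div_le_iff₀ (by positivity)] at hfu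
  exact hvx (by rw [hclosed _ x hx' hfl hfu, hcentre, hzero])

/-- A nonconstant period yields a gain `δ > 0` that is uniform in the left cutoff `a`. -/
lemma exists_uniform_gain {v : ℝ → ℝ} (hmono : AntitoneOn v (Ioi (0 : ℝ)))
    (hcont : ContinuousOn v (Ioi (0 : ℝ))) (hlim : Tendsto v atTop (nhds 0))
    (hne : ∃ x ∈ Ioi (0 : ℝ), v x ≠ 0) :
    ∃ δ > 0, ∃ M : ℕ, 1 ≤ M ∧ ∃ ε > 0, ∀ a, 0 < a → a < ε →
      δ + v Real.pi * (Real.cos a - 1) ≤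
        ∫ x in a..((M : ℝ) * (2 * Real.pi)), Real.sin x * v x := by
  have hpi := Real.pi_pos
  obtain ⟨k, x, hx1, hx2, hvx⟩ := exists_nonconstant_period hcont hlim hne
  have hx0 : 0 < x := lt_of_le_of_lt (by positivity) hx1
  have hgap : 0 < Real.sin x * (v x - v (k * (2 * Real.pi) + Real.pi)) :=
    lt_of_le_of_ne (sine_gap_nonneg hmono k hx0 hx1.le hx2.le)
      (mul_ne_zero (sine_ne_zero_of_mem_period k hx1 hx2 fun h => hvx (by rw [h]))
        (sub_ne_zero.2 hvx)).symm
  have hgain : ∀ p : ℝ, 0 < p → k * (2 * Real.pi) ≤ p → p ≤ x →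
      0 < ∫ y in p..((k + 1 : ℝ) * (2 * Real.pi)),
        Real.sin y * (v y - v (k * (2 * Real.pi) + Real.pi)) := fun p hp hp1 hp2 =>
    intervalIntegral.integral_pos (by linarith) (sine_gap_continuousOn hcont _ hp)
      (fun y hy => sine_gap_nonneg hmono k (hp.trans hy.1) (hp1.trans hy.1.le) hy.2)
      ⟨x, ⟨hp2, hx2.le⟩, hgap⟩
  rcases Nat.eq_zero_or_pos k with rfl | hk
  · -- In the first period only `[x/2, 2π]` is used, which makes the gain independent of `a`.
    refine ⟨_, hgain (x / 2) (by linarith) (by push_cast; linarith) (by linarith), 1, le_rfl,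
      x / 2, by linarith, fun a ha hax => ?_⟩
    have h := integral_sine_mul_eq hcont (v ((0 : ℕ) * (2 * Real.pi) + Real.pi)) 0 ha
    have hint : ∀ p q : ℝ, 0 < p → p ≤ q → IntervalIntegrable
        (fun y => Real.sin y * (v y - v ((0 : ℕ) * (2 * Real.pi) + Real.pi))) volume p q :=
      fun p q hp hpq => (sine_gap_continuousOn hcont _ hp).intervalIntegrable_of_Icc hpq
    have hadd := intervalIntegral.integral_add_adjacent_intervals (hint a (x / 2) ha hax.le)
      (hint (x / 2) (((0 : ℕ) + 1) * (2 * Real.pi)) (by linarith)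
        (by push_cast at hx2 ⊢; linarith))
    have hnn : 0 ≤ ∫ y in a..(x / 2),
        Real.sin y * (v y - v ((0 : ℕ) * (2 * Real.pi) + Real.pi)) :=
      intervalIntegral.integral_nonneg hax.le fun y hy =>
        sine_gap_nonneg hmono 0 (ha.trans_le hy.1) (by push_cast; linarith [hy.1])
          (by linarith [hy.2])
    simp only [Nat.cast_zero, zero_mul, zero_add, one_mul, Nat.cast_one] at h hadd hnn ⊢
    linarith
  · have hk0 : (0 : ℝ) < k := by exact_mod_cast hk
    have hkp : (0 : ℝ) < k * (2 * Real.pi) := by positivity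
    refine ⟨_, hgain (k * (2 * Real.pi)) hkp le_rfl hx1.le, k + 1, by omega,
      2 * Real.pi, by positivity, fun a ha hax => ?_⟩
    have h1 := integral_period_ge hmono hcont 0 ha (by push_cast; linarith)
      (by push_cast; linarith)
    have h2 := integral_monotone hmono hcont ha le_rfl hk
    have h3 := integral_sine_mul_eq hcont (v (k * (2 * Real.pi) + Real.pi)) k hkp
    rw [Real.cos_nat_mul_two_pi, sub_self, mul_zero, add_zero] at h3
    have h4 := intervalIntegral.integral_add_adjacent_intervals
      (sine_mul_intervalIntegrable hcont ha hkp)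
      (sine_mul_intervalIntegrable hcont hkp (b := (k + 1) * (2 * Real.pi)) (by positivity))
    simp only [Nat.cast_zero, zero_mul, zero_add, one_mul, Nat.cast_one, Nat.cast_add]
      at h1 h2 ⊢
    linarith

/-- Let `v` be a weakly decreasing continuous function on `(0,∞)` with `v(x) → 0` as
`x → +∞`, not identically zero, and suppose the two-sided improper Riemann integral
`∫₀^∞ sin(x) v(x) dx` converges to `L` (i.e. `∫_a^b sin(x) v(x) dx → L` as `a → 0⁺`,
`b → ∞`). Then `L > 0`. -/
theorem sine_integral_positivity (v : ℝ → ℝ)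
    (hmono : AntitoneOn v (Set.Ioi (0 : ℝ)))
    (hcont : ContinuousOn v (Set.Ioi (0 : ℝ)))
    (hlim : Tendsto v atTop (nhds 0))
    (hne : ∃ x ∈ Set.Ioi (0 : ℝ), v x ≠ 0)
    (L : ℝ)
    (hL : Tendsto (fun p : ℝ × ℝ => ∫ x in p.1..p.2, Real.sin x * v x)
      ((nhdsWithin 0 (Set.Ioi 0)) ×ˢ atTop) (nhds L)) :
    0 < L := by
  have hpi := Real.pi_pos
  obtain ⟨δ, hδ, M, hM, ε, hε, hgain⟩ := exists_uniform_gain hmono hcont hlim hne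
  have hseq : Tendsto (fun n : ℕ => (n : ℝ) * (2 * Real.pi)) atTop atTop :=
    tendsto_natCast_atTop_atTop.atTop_mul_const (by positivity)
  have hL' : Tendsto (fun p : ℝ × ℕ => ∫ x in p.1..((p.2 : ℝ) * (2 * Real.pi)),
      Real.sin x * v x) ((nhdsWithin 0 (Set.Ioi 0)) ×ˢ atTop) (nhds L) :=
    hL.comp (tendsto_id.prodMap hseq)
  have hlow : Tendsto (fun p : ℝ × ℕ => δ + v Real.pi * (Real.cos p.1 - 1))
      ((nhdsWithin 0 (Set.Ioi 0)) ×ˢ atTop) (nhds δ) := by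
    have hc : Continuous fun a : ℝ => δ + v Real.pi * (Real.cos a - 1) := by fun_prop
    have h : Tendsto (fun a : ℝ => δ + v Real.pi * (Real.cos a - 1)) (nhdsWithin 0 (Set.Ioi 0))
        (nhds δ) := by
      simpa using (hc.tendsto 0).mono_left nhdsWithin_le_nhds
    exact h.comp tendsto_fst
  have hev : ∀ᶠ p : ℝ × ℕ in (nhdsWithin 0 (Set.Ioi 0)) ×ˢ atTop,
      δ + v Real.pi * (Real.cos p.1 - 1) ≤
        ∫ x in p.1..((p.2 : ℝ) * (2 * Real.pi)), Real.sin x * v x := by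
    filter_upwards [prod_mem_prod (Ioo_mem_nhdsGT hε) (Ici_mem_atTop M)] with p hp
    exact (hgain p.1 hp.1.1 hp.1.2).trans (integral_monotone hmono hcont hp.1.1 hM hp.2)
  exact hδ.trans_le (le_of_tendsto_of_tendsto hlow hL' hev)
end
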